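/- Let d ≥ 1 and p ≥ 2 be integers. Let u be a real polynomial in d variables of degree at most p in each variable, and let v be the unique real polynomial in d variables of degree at most p−1 in each variable that agrees with u at every point of the grid {x_1, …, x_p}^d of Gauss–Lobatto nodes. Then ∫_{[−1,1]^d} v(x)² dx ≤ (2 + 4/(2p−3))^d ∫_{[−1,1]^d} u(x)² dx. -/

import Mathlib

open Polynomial

/-- The `n`-th Legendre polynomial, given by the Rodrigues formula
`P_n(x) = 1/(2^n n!) dⁿ/dxⁿ (x² − 1)ⁿ`, normalized so that `P_n(1) = 1`. -/
noncomputable def legendre (n : ℕ) : Polynomial ℝ :=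
  Polynomial.C (1 / (2 ^ n * (n.factorial : ℝ))) *
    (⇑(Polynomial.derivative (R := ℝ)))^[n] ((Polynomial.X ^ 2 - 1) ^ n)

/-- The polynomial `χ_p(x) = P_{p−1}'(x) (x² − 1)`, whose roots are the `p`
Gauss–Lobatto nodes. -/
noncomputable def lobattoChi (p : ℕ) : Polynomial ℝ :=
  Polynomial.derivative (legendre (p - 1)) * (Polynomial.X ^ 2 - 1)

open MeasureTheory

lemma X2D (k : ℕ) (g : ℝ[X]) : derivative^[k+2] ((X^2-1) * g) = (X^2-1) * derivative^[k+2] g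
   + C (2*(k+2:ℝ)) * X * derivative^[k+1] g + C ((k+2:ℝ)*(k+1)) * derivative^[k] g := by
  induction k generalizing g with
  | zero =>
    simp only [Function.iterate_succ_apply', Function.iterate_zero, id, derivative_mul, derivative_sub, derivative_add, derivative_X_pow, derivative_one, derivative_C, derivative_X, map_mul, map_add, map_natCast, map_one, map_ofNat, zero_add]
    simp
    ring
  | succ k ih =>
    rw [Function.iterate_succ_apply', ih]
    simp only [derivative_mul, derivative_add, derivative_sub, derivative_X_pow, derivative_X, derivative_C, derivative_one, Function.iterate_succ_apply']
    simp only [map_mul, map_add, map_natCast, map_ofNat, map_one, Nat.cast_add, Nat.cast_one]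
    simp
    ring
lemma XD (k : ℕ) (g : ℝ[X]) : derivative^[k+1] (X * g) = X * derivative^[k+1] g
   + C (k+1:ℝ) * derivative^[k] g := by
  induction k generalizing g with
  | zero =>
    simp [derivative_mul]; ring
  | succ k ih =>
    rw [Function.iterate_succ_apply', ih]
    simp only [derivative_mul, derivative_add, derivative_X, derivative_C, Function.iterate_succ_apply']
    simp only [map_mul, map_add, map_natCast, map_ofNat, map_one, Nat.cast_add, Nat.cast_one]
    ring

lemma fD1 (n : ℕ) : derivative ((X^2-1 : ℝ[X])^(n+1)) = C (2*(n+1:ℝ)) * (X * (X^2-1)^n) := by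
  simp [derivative_pow, C_ofNat]; ring

lemma legD (n : ℕ) : derivative (legendre (n+2)) = C (2*(n+1)+1:ℝ) * legendre (n+1) + derivative (legendre n) := by
  have h : derivative (derivative ((X^2-1 : ℝ[X])^(n+2))) =
      C (2*(n+2)*(2*(n+1)+1):ℝ) * (X^2-1)^(n+1) + C (4*(n+1)*(n+2) : ℝ) * (X^2-1)^n := by
    rw [fD1]
    simp only [derivative_mul, derivative_C, derivative_X, fD1]
    simp [C_ofNat]; ring
  unfold legendre
  simp only [derivative_mul, derivative_C, zero_mul, zero_add, ← Function.iterate_succ_apply' (derivative : ℝ[X] → ℝ[X])]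
  rw [show (n+2).succ = (n+1)+2 from rfl, Function.iterate_add_apply (derivative : ℝ[X] → ℝ[X]) (n+1) 2]
  simp only [Function.iterate_succ_apply' _ 1, Function.iterate_one]
  rw [h, iterate_map_add, iterate_derivative_C_mul, iterate_derivative_C_mul]
  rw [mul_add]
  simp only [← mul_assoc, ← C_mul]
  have h1 : ((n.factorial:ℕ):ℝ) ≠ 0 := by positivity
  congr 3
  · rw [Nat.factorial_succ (n+1)]; push_cast; field_simp; ring
  · rw [Nat.factorial_succ (n+1), Nat.factorial_succ n]; push_cast; field_simp; ring

lemma leg0 : legendre 0 = 1 := by simp [legendre]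
lemma leg1 : legendre 1 = X := by
  simp [legendre, ← mul_assoc]
  rw [show (1+1:ℝ[X]) = C 2 by rw [map_ofNat]; norm_num, ← C_mul]; norm_num

lemma ode (n : ℕ) : (X^2-1) * derivative (derivative (legendre n)) + C 2 * X * derivative (legendre n)
   = C (n*(n+1):ℝ) * legendre n := by
  cases n with
  | zero => simp [leg0]
  | succ n =>
    have h := congrArg (derivative^[n+2]) (show (X^2-1 : ℝ[X]) * derivative ((X^2-1 : ℝ[X])^(n+1)) = C (2*(n+1:ℝ)) * (X * (X^2-1)^(n+1)) by rw [fD1]; ring)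
    rw [X2D, iterate_derivative_C_mul, XD] at h
    simp only [← Function.iterate_succ_apply (derivative : ℝ[X] → ℝ[X])] at h
    unfold legendre
    simp only [derivative_mul, derivative_C, zero_mul, zero_add, ← Function.iterate_succ_apply' (derivative : ℝ[X] → ℝ[X])]
    generalize derivative^[(n+1).succ.succ] ((X^2-1 : ℝ[X])^(n+1)) = a at *
    generalize derivative^[(n+1).succ] ((X^2-1 : ℝ[X])^(n+1)) = b at *
    generalize derivative^[(n+1)] ((X^2-1 : ℝ[X])^(n+1)) = c at *
    generalize (1 / (2 ^ (n+1) * ((n+1).factorial : ℝ))) = s at *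
    simp only [map_mul, map_add, map_natCast, map_one, map_ofNat, Nat.cast_add, Nat.cast_one] at h ⊢
    linear_combination (C s) * h

lemma legEnd (e : ℝ) (he : e^2 = 1) (n : ℕ) : (legendre n).eval e = e^n ∧ (legendre (n+1)).eval e = e^(n+1) := by
  induction n with
  | zero => simp [leg0, leg1]
  | succ n ih =>
    refine ⟨ih.2, ?_⟩
    have h1 := congrArg (eval e) (legD n)
    have h2 := congrArg (eval e) (ode (n+2))
    have h0 := congrArg (eval e) (ode n)
    simp [he, ih.1, ih.2] at h0 h1 h2
    rw [h1] at h2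
    have h4 : ((n:ℝ)+2)*(n+3) ≠ 0 := by positivity
    apply mul_left_cancel₀ h4
    have : e^(n+2) = e^n := by rw [pow_add, he, mul_one]
    rw [show n+1+1=n+2 from rfl, this]
    have h5 : e * e^(n+1) = e^n := by rw [← this]; ring
    linear_combination -h2 + h0 + 2*(2*(n+1)+1) * h5

lemma legD_end (e : ℝ) (he : e^2 = 1) (n : ℕ) (hn : 1 ≤ n) : (derivative (legendre n)).eval e ≠ 0 := by
  intro h
  have h2 := congrArg (eval e) (ode n)
  have : e ≠ 0 := by rintro rfl; norm_num at he
  have h4 : (n:ℝ) ≠ 0 := by positivity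
  have h5 : (n:ℝ)+1 ≠ 0 := by positivity
  simp [he, h, (legEnd e he n).1, this, h4, h5] at h2

lemma lob_eq (n : ℕ) : C (2*(n+1)+1:ℝ) * ((X^2-1) * derivative (legendre (n+1))) =
    C ((n+1)*(n+2):ℝ) * (legendre (n+2) - legendre n) := by
  have h : derivative (C (2*(n+1)+1:ℝ) * ((X^2-1) * derivative (legendre (n+1))) -
    C ((n+1)*(n+2):ℝ) * (legendre (n+2) - legendre n)) = 0 := by
    have h1 := ode (n+1)
    have h2 := legD n
    simp only [derivative_sub, derivative_mul, derivative_C, derivative_X_pow, derivative_one, zero_mul, zero_add]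
    simp only [map_mul, map_add, map_natCast, map_one, map_ofNat, Nat.cast_add, Nat.cast_one, Nat.cast_ofNat] at h1 h2 ⊢
    simp
    linear_combination (2*((n:ℝ[X])+1)+1) * h1 - (((n:ℝ[X])+1)*(n+2)) * h2
  have h3 := derivative_eq_zero.mp h
  rw [natDegree_eq_zero] at h3
  obtain ⟨c, hc⟩ := h3
  have h4 := congrArg (eval 1) hc
  have h5 := fun n => (legEnd 1 (by norm_num) n).1
  simp [h5] at h4
  rw [h4, C_0] at hc
  exact sub_eq_zero.mp hc.symm

lemma leg_deg (n : ℕ) : (legendre n).natDegree ≤ n := by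
  unfold legendre
  refine (natDegree_C_mul_le _ _).trans ?_
  refine (natDegree_iterate_derivative _ _).trans ?_
  have : ((X^2-1 : ℝ[X])^n).natDegree ≤ n * 2 := by
    refine natDegree_pow_le_of_le n ?_
    compute_degree
  omega

noncomputable def JJ (q : ℝ[X]) : ℝ := ∫ x in (-1:ℝ)..1, q.eval x

lemma JJ_add (a b : ℝ[X]) : JJ (a + b) = JJ a + JJ b := by
  unfold JJ
  simp only [eval_add]
  exact intervalIntegral.integral_add (a.continuous.intervalIntegrable _ _) (b.continuous.intervalIntegrable _ _)

lemma JJ_C (c : ℝ) (b : ℝ[X]) : JJ (C c * b) = c * JJ b := by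
  unfold JJ
  simp

lemma JJ_sub (a b : ℝ[X]) : JJ (a - b) = JJ a - JJ b := by
  have := JJ_C (-1) b
  rw [sub_eq_add_neg, JJ_add, show -b = C (-1) * b by simp, this]; ring

lemma JJ_deriv (q : ℝ[X]) : JJ (derivative q) = q.eval 1 - q.eval (-1) := by
  unfold JJ
  exact intervalIntegral.integral_eq_sub_of_hasDerivAt (fun x _ => q.hasDerivAt x)
    (q.derivative.continuous.intervalIntegrable _ _)

lemma JJ_sq_nonneg (q : ℝ[X]) : 0 ≤ JJ (q * q) := by
  unfold JJ
  apply intervalIntegral.integral_nonneg (by norm_num)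
  intro x _
  simp only [eval_mul]; exact mul_self_nonneg _

lemma leg_orth (m : ℕ) : ∀ (n : ℕ) (q : ℝ[X]), q.natDegree ≤ m → m < n → JJ (legendre n * q) = 0 := by
  have key : ∀ (k : ℕ) (q : ℝ[X]), (2*(k+1)+1:ℝ) * JJ (legendre (k+1) * q) = 
      JJ (legendre k * derivative q) - JJ (legendre (k+2) * derivative q) := by
    intro k q
    have h := JJ_deriv ((legendre (k+2) - legendre k) * q)
    have h5 := fun n => (legEnd 1 (by norm_num) n).1
    have h6 := fun n => (legEnd (-1) (by norm_num) n).1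
    have e : derivative ((legendre (k+2) - legendre k) * q) = C (2*(k+1)+1:ℝ) * (legendre (k+1) * q)
       + legendre (k+2) * derivative q - legendre k * derivative q := by
      rw [derivative_mul, derivative_sub, legD]; ring
    rw [e, JJ_sub, JJ_add, JJ_C] at h
    simp only [eval_mul, eval_sub, h5, h6, one_pow] at h
    rw [pow_add] at h
    norm_num at h
    linarith
  induction m with
  | zero =>
    intro n q hq hn
    obtain ⟨k, rfl⟩ : ∃ k, n = k+1 := ⟨n-1, by omega⟩
    have h := key k q
    rw [derivative_eq_zero.mpr (by omega)] at h
    have h2 : JJ 0 = 0 := by simp [JJ]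
    have h3 : (2*(k+1)+1:ℝ) ≠ 0 := by positivity
    simpa [h2, h3] using h
  | succ m ih =>
    intro n q hq hn
    obtain ⟨k, rfl⟩ : ∃ k, n = k+1 := ⟨n-1, by omega⟩
    have h := key k q
    have hd : (derivative q).natDegree ≤ m := (natDegree_derivative_le q).trans (by omega)
    rw [ih k _ hd (by omega), ih (k+2) _ hd (by omega)] at h
    have h3 : (2*(k+1)+1:ℝ) ≠ 0 := by positivity
    simpa [h3] using h

lemma leg_norm (n : ℕ) : JJ (legendre n * legendre n) = 2 / (2*n+1) := by
  have h5 := (legEnd 1 (by norm_num) n).1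
  have h6 := (legEnd (-1) (by norm_num) n).1
  have h := JJ_deriv (X * (legendre n * legendre n))
  simp only [eval_mul, eval_X, h5, h6] at h
  have e : derivative (X * (legendre n * legendre n)) = C (2*n+1:ℝ) * (legendre n * legendre n) +
     C 2 * (legendre n * (X * derivative (legendre n) - C (n:ℝ) * legendre n)) := by
    simp only [derivative_mul, derivative_X, map_add, map_mul, map_natCast, map_one, map_ofNat]
    ring
  have h7 : JJ (legendre n * (X * derivative (legendre n) - C (n:ℝ) * legendre n)) = 0 := by
    cases n with
    | zero => simp [leg0, JJ]
    | succ n =>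
      apply leg_orth n _ _ _ (by omega)
      rw [natDegree_le_iff_coeff_eq_zero]
      intro N hN
      obtain ⟨k, rfl⟩ : ∃ k, N = k+1 := ⟨N-1, by omega⟩
      rw [coeff_sub, coeff_X_mul, coeff_derivative, coeff_C_mul]
      by_cases hk : k = n
      · subst hk; push_cast; ring
      · have : (legendre (n+1)).coeff (k+1) = 0 := 
          coeff_eq_zero_of_natDegree_lt ((leg_deg _).trans_lt (by omega))
        rw [this]; ring
  rw [e, JJ_add, JJ_C, JJ_C, h7] at h
  have h8 : ((-1:ℝ)^n * (-1)^n) = 1 := by rw [← mul_pow]; norm_num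
  rw [h8] at h
  rw [eq_div_iff (by positivity)]
  norm_num at h
  linarith

lemma leg_lc (n : ℕ) : (legendre n).coeff n ≠ 0 := by
  intro h
  cases n with
  | zero => simp [leg0] at h
  | succ n =>
    have h2 := leg_norm (n+1)
    rw [leg_orth n (n+1) _ _ (by omega)] at h2
    · have : (2:ℝ) / (2*(n+1:ℕ)+1) > 0 := by positivity
      linarith
    · rw [natDegree_le_iff_coeff_eq_zero]
      intro N hN
      rcases eq_or_ne N (n+1) with rfl | h3
      · exact h
      · exact coeff_eq_zero_of_natDegree_lt ((leg_deg _).trans_lt (by omega))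

lemma one_dim (n : ℕ) (N : Finset ℝ) (hN : N.card = n+2)
    (hroot : ∀ x ∈ N, (lobattoChi (n+2)).eval x = 0) (u v : ℝ[X]) (hu : u.natDegree ≤ n+2)
    (hv : v.natDegree ≤ n+1) (huv : ∀ x ∈ N, v.eval x = u.eval x) :
    JJ (v*v) ≤ (2 + 4 / (2 * ((n+2:ℕ) : ℝ) - 3)) * JJ (u*u) := by
  set A := legendre (n+2) with hA
  set B := legendre n with hB
  set c := (u-v).coeff (n+2) / A.coeff (n+2) with hc
  have hAd : A.natDegree ≤ n+2 := leg_deg _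
  have hBd : B.natDegree ≤ n := leg_deg _
  have hlc : A.coeff (n+2) ≠ 0 := leg_lc _
  have hAB : ∀ x ∈ N, A.eval x - B.eval x = 0 := by
    intro x hx
    have h := congrArg (eval x) (lob_eq n)
    have h1 := hroot x hx
    simp only [lobattoChi, eval_mul, show n+2-1 = n+1 from rfl, eval_C] at h h1
    rw [mul_comm] at h1
    rw [h1, mul_zero, eval_sub] at h
    have : ((n:ℝ)+1)*(n+2) ≠ 0 := by positivity
    exact (mul_eq_zero.mp h.symm).resolve_left this
  have h0 : u - v - C c * (A - B) = 0 := by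
    apply eq_zero_of_degree_lt_of_eval_finset_eq_zero N
    · rw [hN, degree_lt_iff_coeff_zero]
      intro m hm
      rcases hm.eq_or_lt with rfl | hm
      · rw [coeff_sub, coeff_C_mul, coeff_sub A, coeff_eq_zero_of_natDegree_lt (hBd.trans_lt (by omega)), hc]
        field_simp; ring
      · simp only [coeff_sub, coeff_C_mul, coeff_eq_zero_of_natDegree_lt (hBd.trans_lt (show n < m by omega)),
          coeff_eq_zero_of_natDegree_lt (hAd.trans_lt (show n+2 < m by omega)),
          coeff_eq_zero_of_natDegree_lt (hu.trans_lt (show n+2 < m by omega)),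
          coeff_eq_zero_of_natDegree_lt (hv.trans_lt (show n+1 < m by omega))]
        ring
    · intro x hx
      simp [hAB x hx, huv x hx]
  set w := v - C c * B with hw
  have hwd : w.natDegree ≤ n+1 := by
    refine (natDegree_sub_le _ _).trans (max_le hv ((natDegree_C_mul_le _ _).trans (by omega)))
  have hAw : JJ (A * w) = 0 := leg_orth (n+1) (n+2) w hwd (by omega)
  have eu : u * u = w * w + C (2*c) * (A * w) + C (c^2) * (A*A) := by
    have : u = w + C c * A := by rw [hw]; linear_combination h0
    rw [this]; simp only [map_mul, map_pow, map_ofNat]; ring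
  have ev : v * v = w * w + C (2*c) * (w * B) + C (c^2) * (B*B) := by
    have : v = w + C c * B := by rw [hw]; ring
    rw [this]; simp only [map_mul, map_pow, map_ofNat]; ring
  set r : ℝ := (2*n+5)/(2*n+1) with hr
  have hr0 : 0 < r := by positivity
  have hnn := JJ_sq_nonneg (C r * w - C c * B)
  have en : (C r * w - C c * B) * (C r * w - C c * B) = C (r^2) * (w*w) - C (2*r*c) * (w*B) + C (c^2) * (B*B) := by
    simp only [map_mul, map_pow, map_ofNat]; ring
  have hBB : JJ (B*B) = r * JJ (A*A) := by
    rw [hA, hB, leg_norm, leg_norm, hr]; push_cast; field_simp; ring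
  rw [en, JJ_add, JJ_sub, JJ_C, JJ_C, JJ_C, hBB] at hnn
  have hK : (2 + 4 / (2 * ((n+2:ℕ) : ℝ) - 3)) = 1 + r := by
    rw [hr]; push_cast
    rw [show (2*((n:ℝ)+2)-3) = 2*n+1 by ring]; field_simp; ring
  rw [hK, eu, ev]
  simp only [JJ_add, JJ_C, hAw, hBB]
  have : 0 ≤ r * (r * JJ (w*w) - 2 * c * JJ (w*B) + c^2 * JJ (A*A)) := by linarith
  have := nonneg_of_mul_nonneg_right this hr0
  linarith

lemma iter_roots (n : ℕ) : ∀ k, k < n → k + 2 ≤ (derivative^[k] ((X^2-1 : ℝ[X])^n)).roots.toFinset.card := by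
  have hf0 : ((X^2-1 : ℝ[X])^n) ≠ 0 := by
    apply pow_ne_zero
    intro h
    have := congrArg (eval 2) h
    norm_num at this
  have hne : ∀ k, k < n → derivative^[k] ((X^2-1 : ℝ[X])^n) ≠ 0 := by
    intro k hk h
    have h1 : derivative^[n] ((X^2-1 : ℝ[X])^n) = 0 := by
      obtain ⟨j, rfl⟩ : ∃ j, n = j + k := ⟨n-k, by omega⟩
      rw [Function.iterate_add_apply, h, iterate_derivative_zero]
    have h2 := (legEnd 1 (by norm_num) n).1
    unfold legendre at h2
    rw [h1] at h2
    simp at h2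
  have hpm : ∀ k, k < n → ({1,-1} : Finset ℝ) ⊆ (derivative^[k] ((X^2-1 : ℝ[X])^n)).roots.toFinset := by
    intro k hk x hx
    rw [Multiset.mem_toFinset, mem_roots (hne k hk)]
    have h1 : (X^2-1 : ℝ[X]) ∣ derivative^[k] ((X^2-1 : ℝ[X])^n) :=
      (dvd_pow_self _ (by omega)).trans (pow_sub_dvd_iterate_derivative_pow _ n k)
    refine IsRoot.dvd ?_ h1
    simp at hx
    rcases hx with rfl | rfl <;> simp
  have h2 : ({1,-1} : Finset ℝ).card = 2 := Finset.card_pair (by norm_num)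
  intro k
  induction k with
  | zero =>
    intro hk
    have := Finset.card_le_card (hpm 0 hk)
    omega
  | succ k ih =>
    intro hk
    have h3 := ih (by omega)
    have h4 := card_roots_toFinset_le_card_roots_derivative_sdiff_roots_succ (derivative^[k] ((X^2-1 : ℝ[X])^n))
    rw [← Function.iterate_succ_apply' (derivative : ℝ[X] → ℝ[X])] at h4
    have h5 := hpm k (by omega)
    have h6 := hpm (k+1) hk
    have h7 : Disjoint ((derivative^[k.succ] ((X^2-1 : ℝ[X])^n)).roots.toFinset \ (derivative^[k] ((X^2-1 : ℝ[X])^n)).roots.toFinset) ({1,-1} : Finset ℝ) := 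
      Finset.disjoint_of_subset_right h5 Finset.sdiff_disjoint
    have h8 := Finset.card_le_card (Finset.union_subset (Finset.sdiff_subset (t := (derivative^[k] ((X^2-1 : ℝ[X])^n)).roots.toFinset)) h6)
    rw [Finset.card_union_of_disjoint h7] at h8
    omega

lemma nodes (n : ℕ) : ∃ N : Finset ℝ, N.card = n+2 ∧ ∀ x ∈ N, (lobattoChi (n+2)).eval x = 0 := by
  have h1 := iter_roots (n+1) n (by omega)
  have h2 := card_roots_toFinset_le_derivative (derivative^[n] ((X^2-1 : ℝ[X])^(n+1)))
  have h3 := card_roots_toFinset_le_derivative (derivative (derivative^[n] ((X^2-1 : ℝ[X])^(n+1))))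
  have e : (derivative (derivative (derivative^[n] ((X^2-1 : ℝ[X])^(n+1))))).roots = (derivative (legendre (n+1))).roots := by
    unfold legendre
    rw [derivative_C_mul, roots_C_mul _ (by positivity), Function.iterate_succ_apply']
  rw [e] at h3
  set R := (derivative (legendre (n+1))).roots.toFinset with hR
  have hRe : ∀ x ∈ R, (derivative (legendre (n+1))).eval x = 0 := by
    intro x hx
    rw [hR, Multiset.mem_toFinset] at hx
    exact (mem_roots'.mp hx).2
  have hd : Disjoint R ({1,-1} : Finset ℝ) := by
    rw [Finset.disjoint_right]
    intro x hx hxR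
    simp at hx
    exact legD_end x (by rcases hx with rfl | rfl <;> norm_num) (n+1) (by omega) (hRe x hxR)
  have hcard : n+2 ≤ (R ∪ {1,-1}).card := by
    rw [Finset.card_union_of_disjoint hd, Finset.card_pair (by norm_num)]; omega
  obtain ⟨N, hN, hc⟩ := Finset.exists_subset_card_eq hcard
  refine ⟨N, hc, fun x hx => ?_⟩
  have := hN hx
  simp only [lobattoChi, eval_mul, show n+2-1 = n+1 from rfl]
  rw [Finset.mem_union] at this
  rcases this with h | h
  · rw [hRe x h, zero_mul]
  · simp at h
    rcases h with rfl | rfl <;> simp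

lemma mv_slice {d : ℕ} (k : ℕ) (u : MvPolynomial (Fin d) ℝ) (i : Fin d) (hu : u.degreeOf i ≤ k)
    (x : Fin d → ℝ) : ∃ q : ℝ[X], q.natDegree ≤ k ∧
      ∀ t, MvPolynomial.eval (Function.update x i t) u = q.eval t := by
  refine ⟨∑ m ∈ u.support, C (u.coeff m * ∏ l ∈ Finset.univ.erase i, x l ^ m l) * X ^ (m i), ?_, ?_⟩
  · apply natDegree_sum_le_of_forall_le
    intro m hm
    refine (natDegree_C_mul_X_pow_le _ _).trans ?_
    exact (MvPolynomial.monomial_le_degreeOf i hm).trans hu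
  · intro t
    rw [MvPolynomial.eval_eq', eval_finsetSum]
    refine Finset.sum_congr rfl fun m _ => ?_
    rw [← Finset.mul_prod_erase _ _ (Finset.mem_univ i)]
    rw [Finset.prod_congr rfl (g := fun l => x l ^ m l)]
    · simp only [Function.update_self, eval_mul, eval_C, eval_pow, eval_X]; ring
    · intro l hl
      rw [Function.update_of_ne (Finset.ne_of_mem_erase hl)]

def GoodFn {d : ℕ} (p : ℕ) (w : (Fin d → ℝ) → ℝ) : Prop :=
  Continuous w ∧ ∀ x i, ∃ q : ℝ[X], q.natDegree ≤ p ∧ ∀ t, w (Function.update x i t) = q.eval t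

noncomputable def interpJ {d : ℕ} (N : Finset ℝ) (j : Fin d) (w : (Fin d → ℝ) → ℝ) : (Fin d → ℝ) → ℝ :=
  fun x => (Lagrange.interpolate N id (fun t => w (Function.update x j t))).eval (x j)

lemma interpJ_apply {d : ℕ} (N : Finset ℝ) (j : Fin d) (w : (Fin d → ℝ) → ℝ) (x) :
    interpJ N j w x = ∑ t ∈ N, w (Function.update x j t) * (Lagrange.basis N id t).eval (x j) := by
  simp [interpJ, Lagrange.interpolate_apply, eval_finsetSum]

lemma interp_deg (N : Finset ℝ) (n : ℕ) (hN : N.card = n+2) (r : ℝ → ℝ) :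
    (Lagrange.interpolate N id r).natDegree ≤ n+1 := by
  have := Lagrange.degree_interpolate_le (s := N) (v := id) r (Function.injective_id.injOn)
  rw [hN] at this
  exact natDegree_le_of_degree_le this

lemma interpJ_update {d : ℕ} (N : Finset ℝ) (j : Fin d) (w : (Fin d → ℝ) → ℝ) (x) (t : ℝ) :
    interpJ N j w (Function.update x j t) =
      (Lagrange.interpolate N id (fun t => w (Function.update x j t))).eval t := by
  simp [interpJ]

lemma interpJ_good {d : ℕ} (n : ℕ) (N : Finset ℝ) (hN : N.card = n+2) (j : Fin d)
    (w : (Fin d → ℝ) → ℝ) (hw : GoodFn (n+2) w) : GoodFn (n+2) (interpJ N j w) := by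
  obtain ⟨hc, hq⟩ := hw
  constructor
  · have : interpJ N j w = fun x => ∑ t ∈ N, w (Function.update x j t) * (Lagrange.basis N id t).eval (x j) := by
      funext x; exact interpJ_apply N j w x
    rw [this]
    refine continuous_finsetSum _ fun t _ => ?_
    refine (hc.comp (continuous_id.update j continuous_const)).mul ?_
    exact (Polynomial.continuous _).comp (continuous_apply j)
  · intro x i
    by_cases hij : i = j
    · subst hij
      exact ⟨_, (interp_deg N n hN _).trans (by omega), fun t => interpJ_update N i w x t⟩
    · choose q hqd hqe using fun t => hq (Function.update x j t) i
      refine ⟨∑ t ∈ N, C ((Lagrange.basis N id t).eval (x j)) * q t, ?_, ?_⟩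
      · apply natDegree_sum_le_of_forall_le
        intro t _
        exact (natDegree_C_mul_le _ _).trans (hqd t)
      · intro s
        rw [interpJ_apply, eval_finsetSum]
        refine Finset.sum_congr rfl fun t _ => ?_
        rw [Function.update_comm hij, hqe, Function.update_of_ne (Ne.symm hij)]
        simp [mul_comm]

lemma lint_JJ (q : ℝ[X]) : ∫⁻ t in Set.Icc (-1:ℝ) 1, ENNReal.ofReal (q.eval t ^ 2) = ENNReal.ofReal (JJ (q*q)) := by
  unfold JJ
  rw [intervalIntegral.integral_of_le (by norm_num), ← integral_Icc_eq_integral_Ioc,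
    ofReal_integral_eq_lintegral_ofReal]
  · simp [pow_two]
  · exact ((q*q).continuous.continuousOn).integrableOn_Icc
  · exact Filter.Eventually.of_forall fun x => by simp only [eval_mul]; exact mul_self_nonneg _

lemma interpJ_bound {d : ℕ} (n : ℕ) (N : Finset ℝ) (hN : N.card = n+2)
    (hroot : ∀ x ∈ N, (lobattoChi (n+2)).eval x = 0) (j : Fin d)
    (w : (Fin d → ℝ) → ℝ) (hw : GoodFn (n+2) w) :
    ∫⁻ x, ENNReal.ofReal (interpJ N j w x ^ 2) ∂(Measure.pi fun _ : Fin d => (volume : Measure ℝ).restrict (Set.Icc (-1) 1))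
    ≤ ENNReal.ofReal (2 + 4 / (2 * ((n+2:ℕ) : ℝ) - 3)) * 
    ∫⁻ x, ENNReal.ofReal (w x ^ 2) ∂(Measure.pi fun _ : Fin d => (volume : Measure ℝ).restrict (Set.Icc (-1) 1)) := by
  have hK : (0:ℝ) ≤ 2 + 4 / (2 * ((n+2:ℕ) : ℝ) - 3) := by
    push_cast
    rw [show (2*((n:ℝ)+2)-3) = 2*n+1 by ring]; positivity
  have m1 : Measurable fun x => ENNReal.ofReal (interpJ N j w x ^ 2) :=
    ENNReal.measurable_ofReal.comp ((interpJ_good n N hN j w hw).1.measurable.pow_const 2)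
  have m2 : Measurable fun x => ENNReal.ofReal (w x ^ 2) :=
    ENNReal.measurable_ofReal.comp (hw.1.measurable.pow_const 2)
  rw [← lintegral_const_mul _ m2]
  apply lintegral_le_of_lmarginal_le {j} m1 (m2.const_mul _)
  rw [lmarginal_singleton, lmarginal_singleton]
  intro x
  obtain ⟨q, hqd, hqe⟩ := hw.2 x j
  simp only [interpJ_update, hqe]
  have m3 : Measurable fun t => ENNReal.ofReal (q.eval t ^ 2) :=
    ENNReal.measurable_ofReal.comp (q.continuous.measurable.pow_const 2)
  rw [lintegral_const_mul _ m3, lint_JJ, lint_JJ, ← ENNReal.ofReal_mul hK]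
  apply ENNReal.ofReal_le_ofReal
  apply one_dim n N hN hroot q _ hqd (interp_deg N n hN _)
  intro y hy
  exact Lagrange.eval_interpolate_at_node (v := id) _ (Function.injective_id.injOn) hy


/-- L² stability of tensor-product Gauss–Lobatto interpolation in `d` dimensions:
if `u` is a polynomial in `d` variables of degree at most `p` in each variable, and
`v` is the polynomial of degree at most `p − 1` in each variable agreeing with `u`
at every point of the grid of Gauss–Lobatto nodes (the points all of whose
coordinates are roots of `χ_p`), then
`∫_{[−1,1]^d} v² ≤ (2 + 4/(2p−3))^d ∫_{[−1,1]^d} u²`. -/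
theorem gauss_lobatto_interp_l2_stability_multi (d p : ℕ) (hd : 1 ≤ d) (hp : 2 ≤ p)
    (u v : MvPolynomial (Fin d) ℝ)
    (hu : ∀ i, u.degreeOf i ≤ p) (hv : ∀ i, v.degreeOf i ≤ p - 1)
    (hinterp : ∀ x : Fin d → ℝ, (∀ i, (lobattoChi p).eval (x i) = 0) →
      MvPolynomial.eval x v = MvPolynomial.eval x u) :
    ∫ x in Set.univ.pi fun _ : Fin d => Set.Icc (-1 : ℝ) 1, (MvPolynomial.eval x v) ^ 2 ≤
      (2 + 4 / (2 * (p : ℝ) - 3)) ^ d *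
        ∫ x in Set.univ.pi fun _ : Fin d => Set.Icc (-1 : ℝ) 1,
          (MvPolynomial.eval x u) ^ 2 := by

  obtain ⟨n, rfl⟩ : ∃ n, p = n+2 := ⟨p-2, by omega⟩
  obtain ⟨N, hN, hroot⟩ := nodes n
  set K : ℝ := 2 + 4 / (2 * ((n+2:ℕ) : ℝ) - 3) with hKd
  have hK : 0 ≤ K := by
    rw [hKd]; push_cast
    rw [show (2*((n:ℝ)+2)-3) = 2*n+1 by ring]; positivity
  have hgood : GoodFn (n+2) (fun x => MvPolynomial.eval x u) :=
    ⟨MvPolynomial.continuous_eval u, fun x i => mv_slice (n+2) u i (hu i) x⟩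
  have hvfix : ∀ (j : Fin d) (x : Fin d → ℝ), interpJ N j (fun x => MvPolynomial.eval x v) x = MvPolynomial.eval x v := by
    intro j x
    obtain ⟨q, hqd, hqe⟩ := mv_slice (n+1) v j (hv j) x
    unfold interpJ
    simp only [hqe]
    have h1 : q = Lagrange.interpolate N id (fun t => q.eval t) := by
      apply Lagrange.eq_interpolate (v := id) (Function.injective_id.injOn)
      rw [hN]
      refine lt_of_le_of_lt degree_le_natDegree ?_
      exact_mod_cast (show q.natDegree < n + 2 by omega)
    rw [← h1, ← hqe, Function.update_eq_self]
  have main : ∀ S : Finset (Fin d), ∃ w : (Fin d → ℝ) → ℝ, GoodFn (n+2) w ∧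
      (∀ x : Fin d → ℝ, (∀ i, i ∉ S → x i ∈ N) → w x = MvPolynomial.eval x v) ∧
      ∫⁻ x, ENNReal.ofReal (w x ^ 2) ∂(Measure.pi fun _ : Fin d => (volume : Measure ℝ).restrict (Set.Icc (-1) 1))
      ≤ ENNReal.ofReal K ^ S.card *
      ∫⁻ x, ENNReal.ofReal (MvPolynomial.eval x u ^ 2) ∂(Measure.pi fun _ : Fin d => (volume : Measure ℝ).restrict (Set.Icc (-1) 1)) := by
    intro S
    induction S using Finset.induction_on with
    | empty =>
      refine ⟨_, hgood, ?_, by simp⟩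
      intro x hx
      exact (hinterp x fun i => hroot _ (hx i (by simp))).symm
    | insert j S hj ih =>
      obtain ⟨w, hw, hwv, hb⟩ := ih
      refine ⟨interpJ N j w, interpJ_good n N hN j w hw, ?_, ?_⟩
      · intro x hx
        rw [← hvfix j x, interpJ_apply, interpJ_apply]
        refine Finset.sum_congr rfl fun t ht => ?_
        rw [hwv]
        intro i hi
        by_cases hij : i = j
        · subst hij; simpa using ht
        · rw [Function.update_of_ne hij]
          exact hx i (by simp [hij, hi])
      · refine (interpJ_bound n N hN hroot j w hw).trans ?_
        rw [Finset.card_insert_of_notMem hj, pow_succ', mul_assoc]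
        gcongr
  obtain ⟨w, -, hwv, hb⟩ := main Finset.univ
  have hweq : w = fun x => MvPolynomial.eval x v := by
    funext x; exact hwv x (by simp)
  subst hweq
  have hint : ∀ q : MvPolynomial (Fin d) ℝ, Integrable (fun x => MvPolynomial.eval x q ^ 2) (Measure.pi fun _ : Fin d => (volume : Measure ℝ).restrict (Set.Icc (-1) 1)) := by
    intro q
    rw [← Measure.restrict_pi_pi, ← volume_pi]
    exact (((MvPolynomial.continuous_eval q).pow 2).continuousOn).integrableOn_compact
      (isCompact_univ_pi fun _ => isCompact_Icc)
  rw [volume_pi, Measure.restrict_pi_pi]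
  rw [← ofReal_integral_eq_lintegral_ofReal (hint v) (Filter.Eventually.of_forall fun x => sq_nonneg _),
    ← ofReal_integral_eq_lintegral_ofReal (hint u) (Filter.Eventually.of_forall fun x => sq_nonneg _),
    ← ENNReal.ofReal_pow hK, ← ENNReal.ofReal_mul (by positivity), Finset.card_univ, Fintype.card_fin] at hb
  exact (ENNReal.ofReal_le_ofReal_iff (mul_nonneg (by positivity) (integral_nonneg fun x => sq_nonneg _))).mp hb
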